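/- arXiv:math/0701340 — 2 statements merged into one kernel-verified Lean document; each statement's English description precedes it below -/
import Mathlib

section
/- Let Q be a quiver and X ⊆ Q_0 a subset of its vertices. Then every nontrivial path p in Q whose source and target both lie in X admits a unique decomposition p = q_r ⋯ q_1 in which every factor q_i is a cell in Q relative to X (the cellular decomposition of p relative to X). -/
/-!
STATEMENT 0: cellular decomposition.

We model a quiver as a type of vertices, a type of arrows and source/target
maps.  A (nontrivial) path from `x` to `y` is a nonempty list of arrows
`[α₁, …, αₙ]` (in order of traversal) such that consecutive arrows are
composable, the source of `α₁` is `x` and the target of `αₙ` is `y`.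
A *cell* relative to a set of vertices `X` is a nontrivial path whose source
and target lie in `X` and all of whose intermediate vertices lie outside `X`.

The theorem: every nontrivial path whose source and target lie in `X`
decomposes uniquely as a concatenation of cells.
-/

/-- A quiver: vertices, arrows, and source/target maps. -/
structure Qvr where
  V : Type
  E : Type
  src : E → V
  tgt : E → V

namespace Qvr

variable (Q : Qvr)

/-- `l = [α₁, …, αₙ]`, listed in order of traversal, is composable. -/
def IsComposable (l : List Q.E) : Prop :=
  l.Chain' (fun a b => Q.tgt a = Q.src b)

/-- `l` is a nontrivial path from `x` to `y`. -/
def IsPathFrom (l : List Q.E) (x y : Q.V) : Prop :=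
  l ≠ [] ∧ Q.IsComposable l ∧ (Q.src <$> l.head? = some x) ∧ (Q.tgt <$> l.getLast? = some y)

/-- The intermediate vertices of a nontrivial path (the targets of all arrows
except the last one). -/
def inners (l : List Q.E) : List Q.V :=
  l.dropLast.map Q.tgt

/-- A cell in `Q` relative to `X`: a nontrivial path whose source and target
lie in `X` and whose intermediate vertices all lie outside `X`. -/
def IsCell (X : Set Q.V) (l : List Q.E) : Prop :=
  ∃ x ∈ X, ∃ y ∈ X, Q.IsPathFrom l x y ∧ ∀ v ∈ Q.inners l, v ∉ X

end Qvr

/-!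
If a path is cut after each arrow whose target lies in `X`, every factor but possibly the last ends
in `X`, and no factor has an intermediate vertex in `X`. Composability identifies the end of each
factor with the start of the next, so the factors are cells as soon as the whole path has both
endpoints in `X`. Conversely, in a concatenation of cells the arrows with target in `X` are exactly
the last arrows of the cells, so the concatenation determines where it is cut.
-/

section List

variable {α : Type*} {p : α → Prop} {l : List α}

theorem isChain_left_iff_forall_mem_dropLast :
    l.IsChain (fun a _ => p a) ↔ ∀ a ∈ l.dropLast, p a := by
  induction l using List.twoStepInduction <;> simp_all

theorem isChain_right_iff_forall_mem_tail : l.IsChain (fun _ b => p b) ↔ ∀ b ∈ l.tail, p b := by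
  induction l using List.twoStepInduction <;> simp_all

theorem getLast?_flatten_eq_of_mem {L : List (List α)} (hl : l ∈ L.getLast?) (hne : l ≠ []) :
    L.flatten.getLast? = l.getLast? := by
  obtain ⟨L, rfl⟩ := List.getLast?_eq_some_iff.1 hl
  rw [List.flatten_concat, List.getLast?_append_of_ne_nil _ hne]

end List

namespace Qvr

variable {Q : Qvr} {X : Set Q.V} {l q : List Q.E} {qs : List (List Q.E)}

theorem IsPathFrom.src_head_mem {x y : Q.V} (hl : Q.IsPathFrom l x y) (hx : x ∈ X) :
    ∀ e ∈ l.head?, Q.src e ∈ X := by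
  intro e he
  obtain ⟨-, -, hsrc, -⟩ := hl
  rw [Option.mem_def.1 he] at hsrc
  exact (Option.some.inj hsrc).symm ▸ hx

theorem IsPathFrom.tgt_getLast_mem {x y : Q.V} (hl : Q.IsPathFrom l x y) (hy : y ∈ X) :
    ∀ e ∈ l.getLast?, Q.tgt e ∈ X := by
  intro e he
  obtain ⟨-, -, -, htgt⟩ := hl
  rw [Option.mem_def.1 he] at htgt
  exact (Option.some.inj htgt).symm ▸ hy

theorem isCell_iff :
    Q.IsCell X q ↔ q ≠ [] ∧ Q.IsComposable q ∧ (∀ e ∈ q.head?, Q.src e ∈ X) ∧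
      (∀ e ∈ q.getLast?, Q.tgt e ∈ X) ∧ ∀ e ∈ q.dropLast, Q.tgt e ∉ X := by
  constructor
  · rintro ⟨x, hx, y, hy, hq, hinner⟩
    exact ⟨hq.1, hq.2.1, hq.src_head_mem hx, hq.tgt_getLast_mem hy,
      fun e he => hinner _ (List.mem_map_of_mem he)⟩
  · rintro ⟨hne, hc, hhead, hlast, hinner⟩
    have hfirst_eq := List.head?_eq_some_head hne
    have hlast_eq := List.getLast?_eq_some_getLast hne
    exact ⟨_, hhead _ hfirst_eq, _, hlast _ hlast_eq,
      ⟨hne, hc, congrArg (Q.src <$> ·) hfirst_eq, congrArg (Q.tgt <$> ·) hlast_eq⟩,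
      List.forall_mem_map.2 hinner⟩

theorem src_head_mem_of_isComposable_flatten (hne : [] ∉ qs) (hc : Q.IsComposable qs.flatten)
    (hhead : ∀ e ∈ qs.flatten.head?, Q.src e ∈ X)
    (hlast : ∀ q ∈ qs, ∀ e ∈ q.getLast?, Q.tgt e ∈ X) :
    ∀ q ∈ qs, ∀ e ∈ q.head?, Q.src e ∈ X := by
  have hchain : qs.IsChain fun _ q => ∀ e ∈ q.head?, Q.src e ∈ X := by
    refine ((List.isChain_flatten hne).1 hc).2.imp_of_mem_imp fun q q' hq _ hjoin e' he' => ?_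
    have hlast_q := List.getLast?_eq_some_getLast (ne_of_mem_of_not_mem hq hne)
    exact hjoin _ hlast_q e' he' ▸ hlast q hq _ hlast_q
  cases qs with
  | nil => simp
  | cons q qs =>
    refine List.forall_mem_cons.2
      ⟨fun e he => hhead e ?_, isChain_right_iff_forall_mem_tail.1 hchain⟩
    rwa [List.flatten_cons, List.head?_append_of_ne_nil _ (List.ne_of_not_mem_cons hne).symm]

open Classical in
/-- The cellular decomposition of the path `l` relative to `X`: the list of arrows `l` is cut after
each arrow whose target lies in `X`. The factors are listed in order of traversal. -/
noncomputable def cells (Q : Qvr) (X : Set Q.V) (l : List Q.E) : List (List Q.E) :=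
  l.splitBy fun e _ => decide (Q.tgt e ∉ X)

variable (X l) in
theorem flatten_cells : (Q.cells X l).flatten = l :=
  List.flatten_splitBy _ l

variable (X l) in
theorem nil_notMem_cells : [] ∉ Q.cells X l :=
  List.nil_notMem_splitBy _ l

theorem tgt_notMem_of_mem_dropLast_of_mem_cells (hq : q ∈ Q.cells X l) :
    ∀ e ∈ q.dropLast, Q.tgt e ∉ X :=
  isChain_left_iff_forall_mem_dropLast.1 <| (List.isChain_of_mem_splitBy hq).imp fun _ _ => by
    simp only [decide_eq_true_eq, imp_self]

variable (X l) in
theorem isChain_cells_tgt_getLast_mem :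
    (Q.cells X l).IsChain fun q _ => ∀ e ∈ q.getLast?, Q.tgt e ∈ X :=
  (List.isChain_getLast_head_splitBy _ l).imp fun q _ ⟨hne, _, h⟩ => by
    simpa [List.getLast?_eq_some_getLast hne] using h

theorem tgt_getLast_mem_of_mem_cells (hlast : ∀ e ∈ l.getLast?, Q.tgt e ∈ X)
    (hq : q ∈ Q.cells X l) : ∀ e ∈ q.getLast?, Q.tgt e ∈ X := by
  by_cases hq_last : q ∈ (Q.cells X l).getLast?
  · rwa [← getLast?_flatten_eq_of_mem hq_last (List.ne_nil_of_mem_splitBy hq), flatten_cells]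
  · exact isChain_left_iff_forall_mem_dropLast.1 (isChain_cells_tgt_getLast_mem X l) q
      (List.mem_dropLast_of_mem_of_ne_getLast? hq (Ne.symm hq_last))

theorem isCell_of_mem_cells (hc : Q.IsComposable l) (hhead : ∀ e ∈ l.head?, Q.src e ∈ X)
    (hlast : ∀ e ∈ l.getLast?, Q.tgt e ∈ X) : ∀ q ∈ Q.cells X l, Q.IsCell X q := by
  intro q hq
  have hinfix : q <:+: l := by
    simpa only [flatten_cells] using List.infix_of_mem_flatten hq
  have hsrc : ∀ e ∈ q.head?, Q.src e ∈ X := by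
    refine src_head_mem_of_isComposable_flatten (nil_notMem_cells X l) ?_ ?_
      (fun q => tgt_getLast_mem_of_mem_cells hlast) q hq <;> rwa [flatten_cells]
  exact isCell_iff.2 ⟨List.ne_nil_of_mem_splitBy hq, hc.infix hinfix, hsrc,
    tgt_getLast_mem_of_mem_cells hlast hq, tgt_notMem_of_mem_dropLast_of_mem_cells hq⟩

theorem cells_flatten (h : ∀ q ∈ qs, Q.IsCell X q) : Q.cells X qs.flatten = qs := by
  have hne : ∀ q ∈ qs, q ≠ [] := fun q hq => (isCell_iff.1 (h q hq)).1
  refine List.splitBy_flatten (fun hnil => hne [] hnil rfl) (fun q hq => ?_)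
    (List.pairwise_of_forall_mem_list fun q hq q' hq' => ?_).isChain
  · obtain ⟨-, -, -, -, hinner⟩ := isCell_iff.1 (h q hq)
    simpa only [decide_eq_true_eq] using isChain_left_iff_forall_mem_dropLast.2 hinner
  · obtain ⟨-, -, -, hlast, -⟩ := isCell_iff.1 (h q hq)
    exact ⟨hne q hq, hne q' hq', by simpa using hlast _ (List.getLast?_eq_some_getLast _)⟩

end Qvr

/-- **Cellular decomposition** (unique decomposition of a path with endpoints
in `X` as a concatenation of cells relative to `X`). -/
theorem cellular_decomposition (Q : Qvr) (X : Set Q.V) (x y : Q.V)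
    (hx : x ∈ X) (hy : y ∈ X) (l : List Q.E) (hl : Q.IsPathFrom l x y) :
    ∃! qs : List (List Q.E), qs.flatten = l ∧ ∀ q ∈ qs, Q.IsCell X q := by
  refine ⟨Q.cells X l, ⟨Qvr.flatten_cells X l, ?_⟩, ?_⟩
  · exact Qvr.isCell_of_mem_cells hl.2.1 (hl.src_head_mem hx) (hl.tgt_getLast_mem hy)
  · rintro qs ⟨rfl, hqs⟩
    exact (Qvr.cells_flatten hqs).symm
end

section
/- Let Q be a quiver and X ⊆ Q_0 a subset of its vertices. Then every path p in Q whose source lies in X and whose target does not lie in X admits a unique decomposition p = t q_r ⋯ q_1 (with r ≥ 0) in which t is a tail in Q relative to X and every q_i is a cell in Q relative to X (the tail decomposition of p relative to X). -/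
namespace Qvr

variable (Q : Qvr)

/-- A tail in `Q` relative to `X`: a nontrivial path whose source lies in `X`
and all of whose other vertices (the targets of all its arrows, in particular
its target) lie outside `X`. -/
def IsTail (X : Set Q.V) (l : List Q.E) : Prop :=
  ∃ x ∈ X, ∃ y, Q.IsPathFrom l x y ∧ ∀ v ∈ l.map Q.tgt, v ∉ X

end Qvr

/-!
Record of each arrow only whether its target lies in `X`. Cells are then arrow lists whose last
entry is marked and no other, tails are lists without marked entries, and a list has exactly one
cutting into such pieces, made after each marked entry. The pieces of a path are paths starting
in `X`, since each cut is at a vertex of `X`; the last piece is nontrivial because the path ends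
outside `X`.
-/

/-- A list that stops at its first entry satisfying `P`; in particular it is nonempty. For `P a`
meaning that the target of `a` lies in `X`, this is the notion of a cell without the conditions on
composability and on the source. -/
def EndsAtFirst {α : Type*} (P : α → Prop) (l : List α) : Prop :=
  (∃ a ∈ l.getLast?, P a) ∧ ∀ a ∈ l.dropLast, ¬ P a

namespace EndsAtFirst

variable {α : Type*} {P : α → Prop} {a : α} {l l' t : List α}

theorem ne_nil (hl : EndsAtFirst P l) : l ≠ [] := by
  rintro rfl
  simpa using hl.1

theorem exists_mem (hl : EndsAtFirst P l) : ∃ a ∈ l, P a :=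
  let ⟨a, ha, hPa⟩ := hl.1
  ⟨a, List.mem_of_getLast? ha, hPa⟩

theorem singleton (ha : P a) : EndsAtFirst P [a] := by
  simpa [EndsAtFirst] using ha

theorem cons (ha : ¬ P a) (hl : EndsAtFirst P l) : EndsAtFirst P (a :: l) := by
  obtain ⟨b, l, rfl⟩ := List.exists_cons_of_ne_nil hl.ne_nil
  simpa [EndsAtFirst, ha] using hl

theorem not_prefix (hl : EndsAtFirst P l) (ht : ∀ a ∈ t, ¬ P a) : ¬ l <+: t := fun hlt =>
  let ⟨a, ha, hPa⟩ := hl.exists_mem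
  ht a (hlt.subset ha) hPa

theorem eq_of_prefix (hl : EndsAtFirst P l) (hl' : EndsAtFirst P l') (h : l <+: l') : l = l' := by
  obtain ⟨s, rfl⟩ := h
  by_contra hne
  have hs : s ≠ [] := by simpa using hne
  refine hl.not_prefix hl'.2 ?_
  rw [List.dropLast_append_of_ne_nil hs]
  exact List.prefix_append l s.dropLast

theorem append_inj {r r' : List α} (hl : EndsAtFirst P l) (hl' : EndsAtFirst P l')
    (h : l ++ r = l' ++ r') : l = l' ∧ r = r' := by
  have hll' : l = l' :=
    (List.prefix_or_prefix_of_prefix (List.prefix_append l r) (h ▸ List.prefix_append l' r')).elim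
      (hl.eq_of_prefix hl') fun h' => (hl'.eq_of_prefix hl h').symm
  exact ⟨hll', List.append_cancel_left (hll' ▸ h)⟩

theorem flatten_append_inj {qs qs' : List (List α)} {t t' : List α}
    (hqs : ∀ q ∈ qs, EndsAtFirst P q) (hqs' : ∀ q ∈ qs', EndsAtFirst P q)
    (ht : ∀ a ∈ t, ¬ P a) (ht' : ∀ a ∈ t', ¬ P a)
    (h : qs.flatten ++ t = qs'.flatten ++ t') : qs = qs' ∧ t = t' := by
  induction qs generalizing qs' with
  | nil =>
    cases qs' with
    | nil => simpa using h
    | cons q' qs' =>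
      have hprefix : q' <+: t := ⟨qs'.flatten ++ t', by simpa using h.symm⟩
      exact absurd hprefix ((hqs' q' List.mem_cons_self).not_prefix ht)
  | cons q qs ih =>
    cases qs' with
    | nil =>
      have hprefix : q <+: t' := ⟨qs.flatten ++ t, by simpa using h⟩
      exact absurd hprefix ((hqs q List.mem_cons_self).not_prefix ht')
    | cons q' qs' =>
      rw [List.forall_mem_cons] at hqs hqs'
      simp only [List.flatten_cons, List.append_assoc] at h
      obtain ⟨rfl, hrest⟩ := hqs.1.append_inj hqs'.1 h
      obtain ⟨rfl, rfl⟩ := ih hqs.2 hqs'.2 hrest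
      exact ⟨rfl, rfl⟩

theorem exists_flatten_append (P : α → Prop) (l : List α) :
    ∃ (qs : List (List α)) (t : List α),
      qs.flatten ++ t = l ∧ (∀ q ∈ qs, EndsAtFirst P q) ∧ ∀ a ∈ t, ¬ P a := by
  induction l with
  | nil => exact ⟨[], [], by simp⟩
  | cons a l ih =>
    obtain ⟨qs, t, rfl, hqs, ht⟩ := ih
    by_cases ha : P a
    · exact ⟨[a] :: qs, t, by simp, List.forall_mem_cons.2 ⟨.singleton ha, hqs⟩, ht⟩
    · cases qs with
      | nil => exact ⟨[], a :: t, by simp, by simp, List.forall_mem_cons.2 ⟨ha, ht⟩⟩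
      | cons q qs =>
        rw [List.forall_mem_cons] at hqs
        exact ⟨(a :: q) :: qs, t, by simp, List.forall_mem_cons.2 ⟨hqs.1.cons ha, hqs.2⟩, ht⟩

theorem existsUnique_flatten_append (P : α → Prop) (l : List α) :
    ∃! d : List (List α) × List α,
      d.1.flatten ++ d.2 = l ∧ (∀ q ∈ d.1, EndsAtFirst P q) ∧ ∀ a ∈ d.2, ¬ P a := by
  obtain ⟨qs, t, hl, hqs, ht⟩ := exists_flatten_append P l
  refine ⟨(qs, t), ⟨hl, hqs, ht⟩, ?_⟩
  rintro ⟨qs', t'⟩ ⟨hl', hqs', ht'⟩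
  exact Prod.ext_iff.2 (flatten_append_inj hqs' hqs ht' ht (hl'.trans hl.symm))

end EndsAtFirst

namespace Qvr

variable {Q : Qvr} {X : Set Q.V} {x y : Q.V} {l t : List Q.E}

theorem IsPathFrom.exists_of_append {l₁ l₂ : List Q.E} (h : Q.IsPathFrom (l₁ ++ l₂) x y)
    (h₁ : l₁ ≠ []) (h₂ : l₂ ≠ []) : ∃ z, Q.IsPathFrom l₁ x z ∧ Q.IsPathFrom l₂ z y := by
  obtain ⟨-, hcomp, hsrc, htgt⟩ := h
  obtain ⟨hcomp₁, hcomp₂, hmeet⟩ := List.isChain_append.1 hcomp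
  rw [List.head?_append_of_ne_nil _ h₁] at hsrc
  rw [List.getLast?_append_of_ne_nil _ h₂] at htgt
  have hlast := List.getLast?_eq_some_getLast h₁
  have hhead := List.head?_eq_some_head h₂
  refine ⟨Q.tgt (l₁.getLast h₁), ⟨h₁, hcomp₁, hsrc, by simp [hlast]⟩, h₂, hcomp₂, ?_, htgt⟩
  simp [hhead, hmeet _ hlast _ hhead]

theorem IsPathFrom.exists_getLast?_tgt_mem_iff (h : Q.IsPathFrom l x y) :
    (∃ a ∈ l.getLast?, Q.tgt a ∈ X) ↔ y ∈ X := by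
  obtain ⟨a, ha, rfl⟩ := Option.map_eq_some_iff.1 h.2.2.2
  simp [ha]

theorem isCell_iff_s1 :
    Q.IsCell X l ↔ EndsAtFirst (Q.tgt · ∈ X) l ∧ ∃ x ∈ X, ∃ y, Q.IsPathFrom l x y := by
  constructor
  · rintro ⟨x, hx, y, hy, hl, hinner⟩
    exact ⟨⟨hl.exists_getLast?_tgt_mem_iff.2 hy, fun a ha => hinner _ (List.mem_map_of_mem ha)⟩,
      x, hx, y, hl⟩
  · rintro ⟨⟨hlast, hinner⟩, x, hx, y, hl⟩
    exact ⟨x, hx, y, hl.exists_getLast?_tgt_mem_iff.1 hlast, hl, List.forall_mem_map.2 hinner⟩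

theorem isTail_iff :
    Q.IsTail X l ↔ (∀ a ∈ l, Q.tgt a ∉ X) ∧ ∃ x ∈ X, ∃ y, Q.IsPathFrom l x y := by
  simp only [IsTail, List.forall_mem_map]
  tauto

theorem IsPathFrom.isCell_and_isTail {qs : List (List Q.E)}
    (h : Q.IsPathFrom (qs.flatten ++ t) x y) (hx : x ∈ X) (hy : y ∉ X)
    (hqs : ∀ q ∈ qs, EndsAtFirst (Q.tgt · ∈ X) q) (ht : ∀ a ∈ t, Q.tgt a ∉ X) :
    (∀ q ∈ qs, Q.IsCell X q) ∧ Q.IsTail X t := by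
  induction qs generalizing x with
  | nil => exact ⟨by simp, isTail_iff.2 ⟨ht, x, hx, y, h⟩⟩
  | cons q qs ih =>
    rw [List.forall_mem_cons] at hqs ⊢
    rw [List.flatten_cons, List.append_assoc] at h
    have hrest : qs.flatten ++ t ≠ [] := by
      intro hnil
      rw [hnil, List.append_nil] at h
      exact hy (h.exists_getLast?_tgt_mem_iff.1 hqs.1.1)
    obtain ⟨z, hq, hpath⟩ := h.exists_of_append hqs.1.ne_nil hrest
    have hz : z ∈ X := hq.exists_getLast?_tgt_mem_iff.1 hqs.1.1
    obtain ⟨hcells, htail⟩ := ih hpath hz hqs.2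
    exact ⟨⟨isCell_iff_s1.2 ⟨hqs.1, x, hx, z, hq⟩, hcells⟩, htail⟩

end Qvr

/-- **Tail decomposition** (unique decomposition of a path starting in `X` and
ending outside `X` as a concatenation of cells relative to `X` followed by a
tail relative to `X`).  The decomposition is recorded as a pair
`(qs, t) = ([q_1, …, q_r], t)` with `p = t q_r ⋯ q_1`, i.e. the arrow list of
`p` is the flattening of `qs` followed by `t`. -/
theorem tail_decomposition (Q : Qvr) (X : Set Q.V) (x y : Q.V)
    (hx : x ∈ X) (hy : y ∉ X) (l : List Q.E) (hl : Q.IsPathFrom l x y) :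
    ∃! d : List (List Q.E) × List Q.E,
      d.1.flatten ++ d.2 = l ∧ (∀ q ∈ d.1, Q.IsCell X q) ∧ Q.IsTail X d.2 := by
  refine (existsUnique_congr ?_).1 (EndsAtFirst.existsUnique_flatten_append (Q.tgt · ∈ X) l)
  rintro ⟨qs, t⟩
  refine and_congr_right ?_
  rintro rfl
  constructor
  · rintro ⟨hqs, ht⟩
    exact hl.isCell_and_isTail hx hy hqs ht
  · rintro ⟨hqs, ht⟩
    exact ⟨fun q hq => (Qvr.isCell_iff_s1.1 (hqs q hq)).1, (Qvr.isTail_iff.1 ht).1⟩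
end
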